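/- For any R sufficiently large and any unit direction vector in the nonnegative orthant of ℝ^d, there exists a primitive integer vector a = (a₁,...,a_d) ∈ ℤ^d with ‖a‖ = (1-o(1))R whose angle θ with the given direction satisfies tan θ ≤ (1+o(1))√(d-1)/R. -/

import Mathlib

/-- Points on a progression of primitive vectors. -/
theorem aux_step (p q : ℤ) (hq : 0 < q) (hpq : IsCoprime p q) (j : ℤ) (hj : j ≠ 0) (M : ℝ) :
    ∃ m n : ℤ, IsCoprime m n ∧ q * n - p * m = j ∧ M - |j| * q < m ∧ (m : ℝ) ≤ M := by
  obtain ⟨x, y, hxy⟩ := hpq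
  -- s = y, r = -x : s q - r p = 1
  have hJ : 0 < |j| := abs_pos.mpr hj
  have hw : 0 < |j| * q := mul_pos hJ hq
  obtain ⟨σ, hσ⟩ : ∃ σ : ℤ, |j| = σ * j := by
    rcases abs_choice j with h | h
    · exact ⟨1, by rw [h]; ring⟩
    · exact ⟨-1, by rw [h]; ring⟩
  set b : ℤ := -(j * x) + q with hb
  set l : ℤ := (⌊M⌋ - b) / (|j| * q) with hl
  have h1 := Int.emod_add_mul_ediv (⌊M⌋ - b) (|j| * q)
  have h2 := Int.emod_nonneg (⌊M⌋ - b) hw.ne'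
  have h3 := Int.emod_lt_of_pos (⌊M⌋ - b) hw
  rw [← hl] at h1
  set k : ℤ := 1 + j * (σ * l) with hk
  have hm : j * (-x) + k * q = b + |j| * q * l := by rw [hk, hb, hσ]; ring
  refine ⟨j * (-x) + k * q, j * y + k * p, ?_, ?_, ?_, ?_⟩
  · -- 1 = k - j σ l
    refine ⟨y + σ * l * p, x - σ * l * q, ?_⟩
    have : k - j * (σ * l) = 1 := by rw [hk]; ring
    linear_combination (k - j * (σ * l)) * hxy + this
  · linear_combination j * hxy
  · rw [hm]
    have : ⌊M⌋ + 1 ≤ b + |j| * q * l + |j| * q := by linarith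
    have h4 : ((⌊M⌋ + 1 : ℤ) : ℝ) ≤ ((b + |j| * q * l + |j| * q : ℤ) : ℝ) := by exact_mod_cast this
    have := Int.lt_floor_add_one M
    push_cast at h4 ⊢
    linarith
  · rw [hm]
    have : b + |j| * q * l ≤ ⌊M⌋ := by linarith
    exact Int.le_floor.mp this

theorem aux_two (η : ℝ) (h0 : 0 < η) (h1 : η ≤ 1) (M : ℝ) (hM : 1 ≤ η ^ 3 * M) (t : ℝ) :
    ∃ m n : ℤ, IsCoprime m n ∧ (1 - η) * M < m ∧ (m : ℝ) ≤ M ∧ |(n : ℝ) - m * t| ≤ 1 := by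
  have hMpos : 0 < M := by
    by_contra h
    push Not at h
    have := mul_nonneg_of_nonpos_of_nonpos (neg_nonpos.mpr (pow_pos h0 3).le) h
    linarith
  have hη3 : η ^ 3 ≤ η := by
    have : η ^ 2 ≤ 1 := pow_le_one₀ h0.le h1
    nlinarith
  have hηM : 1 ≤ η * M := hM.trans (by gcongr)
  have hN : 0 < ⌊η * M⌋₊ := Nat.floor_pos.mpr hηM
  obtain ⟨w, hw, hden⟩ := Real.exists_rat_abs_sub_le_and_den_le t hN
  set q : ℤ := (w.den : ℤ) with hqdef
  set p : ℤ := w.num with hpdef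
  have hq : 0 < q := by rw [hqdef]; exact_mod_cast w.den_pos
  have hqR : (0 : ℝ) < q := by exact_mod_cast hq
  have hq1 : (1 : ℝ) ≤ q := by exact_mod_cast hq
  have hcop : IsCoprime p q := Rat.isCoprime_num_den w
  have hqN : (q : ℝ) ≤ η * M := by
    have h2 : ((w.den : ℕ) : ℝ) ≤ (⌊η * M⌋₊ : ℝ) := by exact_mod_cast hden
    have h3 := Nat.floor_le (show 0 ≤ η * M by linarith)
    simp only [hqdef]; push_cast; linarith
  set δ : ℝ := p - q * t with hδ
  have hwq : (w : ℝ) = p / q := by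
    rw [Rat.cast_def, hqdef, hpdef]; push_cast; rfl
  have hδM : |δ| * (η * M) ≤ 1 := by
    have e : |δ| = q * |t - w| := by
      have e1 : δ = -(q * (t - w)) := by rw [hwq, hδ]; field_simp; ring
      rw [e1, abs_neg, abs_mul, abs_of_pos hqR]
    have h2 := Nat.lt_floor_add_one (η * M)
    have h3 : |t - w| * (((⌊η * M⌋₊ : ℝ) + 1) * q) ≤ 1 := by
      have : (0 : ℝ) < ((⌊η * M⌋₊ : ℝ) + 1) * q := by positivity
      rw [← le_div_iff₀ this]
      simpa [hqdef] using hw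
    rw [e]
    calc (q : ℝ) * |t - w| * (η * M) ≤ q * |t - w| * ((⌊η * M⌋₊ : ℝ) + 1) := by gcongr
      _ = |t - w| * (((⌊η * M⌋₊ : ℝ) + 1) * q) := by ring
      _ ≤ 1 := h3
  have hδ0 := abs_nonneg δ
  -- reduction
  have key : ∀ J : ℤ, 0 < J → (J : ℝ) * q ≤ η * M →
      (∀ m : ℝ, M - J * q < m → m ≤ M → |m * |δ| - J| ≤ q) →
      ∃ m n : ℤ, IsCoprime m n ∧ (1 - η) * M < m ∧ (m : ℝ) ≤ M ∧ |(n : ℝ) - m * t| ≤ 1 := by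
    intro J hJ hJq hm
    obtain ⟨j, hjJ, hj⟩ : ∃ j : ℤ, |j| = J ∧ ∀ m : ℝ, |m * δ + j| = |m * |δ| - J| := by
      rcases abs_choice δ with h | h
      · refine ⟨-J, by rw [abs_neg, abs_of_pos hJ], fun m => ?_⟩
        rw [h]; push_cast; congr 1
      · refine ⟨J, abs_of_pos hJ, fun m => ?_⟩
        rw [h, ← abs_neg]; congr 1; ring
    have hj0 : j ≠ 0 := by
      rintro rfl; simp at hjJ; omega
    obtain ⟨m, n, hmn, hdet, hlo, hhi⟩ := aux_step p q hq hcop j hj0 M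
    have hlo' : M - J * q < m := by
      have : ((|j| : ℤ) : ℝ) = J := by rw [hjJ]
      rw [← this]; push_cast at hlo ⊢; exact hlo
    refine ⟨m, n, hmn, by linarith, hhi, ?_⟩
    have h5 := hm m hlo' hhi
    rw [← hj] at h5
    have hdetR : (q : ℝ) * n - p * m = j := by exact_mod_cast hdet
    have h6 : (m : ℝ) * δ + j = q * (n - m * t) := by rw [hδ]; linear_combination -hdetR
    rw [h6, abs_mul, abs_of_pos hqR] at h5
    nlinarith
  by_cases hc : 1 ≤ η * q
  · refine key 1 one_pos (by simpa using hqN) ?_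
    intro m h2 h3
    have hm0 : 0 ≤ m := by push_cast at h2; nlinarith
    have h4 : m * |δ| * η ≤ 1 := by
      calc m * |δ| * η ≤ M * |δ| * η := by gcongr
        _ ≤ 1 := by linarith
    have h6 : 0 ≤ m * |δ| := by positivity
    have h5 : m * |δ| ≤ q := by
      by_contra h; push Not at h; nlinarith
    rw [abs_le]; push_cast
    constructor <;> linarith
  · push Not at hc
    set J : ℤ := max 1 ⌊M * |δ|⌋ with hJ
    have hMδ : 0 ≤ M * |δ| := by positivity
    have hJ1 : (1 : ℤ) ≤ J := le_max_left _ _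
    have hJη : (J : ℝ) * η ≤ 1 := by
      rcases max_choice 1 ⌊M * |δ|⌋ with h | h
      · rw [hJ, h]; simpa using h1
      · rw [hJ, h]
        calc (⌊M * |δ|⌋ : ℝ) * η ≤ M * |δ| * η := by gcongr; exact Int.floor_le _
          _ ≤ 1 := by linarith
    have hJR : (1 : ℝ) ≤ J := by exact_mod_cast hJ1
    have hJq : (J : ℝ) * q * η ^ 2 ≤ 1 := by
      calc (J : ℝ) * q * η ^ 2 = (J * η) * (η * q) := by ring
        _ ≤ 1 * 1 := by gcongr
        _ = 1 := by ring
    have hJqM : (J : ℝ) * q ≤ η * M := by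
      have : (J : ℝ) * q * η ^ 2 ≤ η * M * η ^ 2 := by nlinarith
      exact le_of_mul_le_mul_right this (by positivity)
    refine key J (by omega) hJqM ?_
    intro m h2 h3
    have hm0 : 0 ≤ m := by nlinarith
    have hup : M * |δ| ≤ J + 1 := by
      have h4 : ((⌊M * |δ|⌋ : ℤ) : ℝ) ≤ J := by exact_mod_cast le_max_right 1 ⌊M * |δ|⌋
      have := Int.lt_floor_add_one (M * |δ|)
      linarith
    have hmM : m * |δ| ≤ M * |δ| := by gcongr
    have hlo : (J : ℝ) - 1 ≤ m * |δ| := by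
      rcases max_choice 1 ⌊M * |δ|⌋ with h | h
      · rw [hJ, h]; push_cast
        have : 0 ≤ m * |δ| := by positivity
        linarith
      · have h4 : (J : ℝ) ≤ M * |δ| := by rw [hJ, h]; exact Int.floor_le _
        have h5 : (M - m) * |δ| ≤ (η * M) * |δ| := by gcongr; linarith
        nlinarith
    rw [abs_le]
    constructor <;> linarith

/-- Primitive integer vectors are angularly dense: for sufficiently large `R` and any unit
direction `u` in the nonnegative orthant, there is a primitive `a ∈ ℤ^d` with
`‖a‖ = (1-o(1))R` (and `‖a‖ ≤ R`) whose angle `θ` with `u` satisfies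
`tan θ ≤ (1+o(1))√(d-1)/R`. -/
theorem stmt_14 (d : ℕ) (hd : 2 ≤ d) :
    ∀ ε : ℝ, 0 < ε → ∃ R₀ : ℝ, ∀ R : ℝ, R₀ ≤ R →
      ∀ u : Fin d → ℝ, (∑ i, u i ^ 2) = 1 → (∀ i, 0 ≤ u i) →
        ∃ a : Fin d → ℤ,
          a ≠ 0 ∧
          Finset.univ.gcd (fun i => (a i).natAbs) = 1 ∧
          (1 - ε) * R ≤ Real.sqrt (∑ i, ((a i : ℝ)) ^ 2) ∧
          Real.sqrt (∑ i, ((a i : ℝ)) ^ 2) ≤ R ∧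
          0 < (∑ i, (a i : ℝ) * u i) ∧
          Real.sqrt ((∑ i, ((a i : ℝ)) ^ 2) - (∑ i, (a i : ℝ) * u i) ^ 2) ≤
            (1 + ε) * Real.sqrt ((d : ℝ) - 1) / R * (∑ i, (a i : ℝ) * u i) := by
  intro ε hε
  set D : ℝ := Real.sqrt ((d : ℝ) - 1) with hD
  have hdR : (2 : ℝ) ≤ d := by exact_mod_cast hd
  have hDsq : D ^ 2 = d - 1 := Real.sq_sqrt (by linarith)
  have hD0 : 0 < D := Real.sqrt_pos.mpr (by linarith)
  obtain ⟨e, he0, he1, heε⟩ : ∃ e : ℝ, 0 < e ∧ e ≤ 1 ∧ e ≤ ε :=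
    ⟨min ε 1, by positivity, min_le_right _ _, min_le_left _ _⟩
  set η : ℝ := e / 4 with hη
  have hη0 : 0 < η := by positivity
  have hη1 : η ≤ 1 := by linarith
  refine ⟨D + d / η ^ 3 + 2 * D / η, ?_⟩
  intro R hR u hu hu0
  have hp1 : 0 < (d : ℝ) / η ^ 3 := by positivity
  have hp2 : 0 < 2 * D / η := by positivity
  have hRpos : 0 < R := by linarith
  have : Nonempty (Fin d) := ⟨⟨0, by omega⟩⟩
  obtain ⟨i0, hi0⟩ := Finite.exists_max u
  obtain ⟨i1, hi1⟩ : ∃ i1 : Fin d, i1 ≠ i0 := by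
    have : Nontrivial (Fin d) := Fin.nontrivial_iff_two_le.mpr hd
    exact exists_ne i0
  set c : ℝ := u i0 with hc
  have hc0 : 0 ≤ c := hu0 i0
  have hcd : 1 ≤ d * c ^ 2 := by
    rw [← hu]
    calc ∑ i, u i ^ 2 ≤ ∑ _i : Fin d, c ^ 2 :=
          Finset.sum_le_sum fun i _ => pow_le_pow_left₀ (hu0 i) (hi0 i) 2
      _ = d * c ^ 2 := by simp
  have hc1 : c ≤ 1 := by
    have : c ^ 2 ≤ 1 := by
      rw [← hu]
      exact Finset.single_le_sum (f := fun i => u i ^ 2) (fun i _ => sq_nonneg _) (Finset.mem_univ i0)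
    nlinarith
  have hcd1 : 1 ≤ d * c := by nlinarith
  have hcpos : 0 < c := by nlinarith
  have hRD : (d : ℝ) / η ^ 3 ≤ R - D := by linarith
  have hMbig : 1 ≤ η ^ 3 * (c * (R - D)) := by
    have h3 : 0 < η ^ 3 := by positivity
    rw [div_le_iff₀ h3] at hRD
    nlinarith
  obtain ⟨m, n, hmn, hlo, hhi, hn⟩ := aux_two η hη0 hη1 (c * (R - D)) hMbig (u i1 / c)
  set s : ℝ := m / c with hs
  have hms : (m : ℝ) = s * c := by rw [hs]; field_simp
  have hs_hi : s ≤ R - D := by rw [hs, div_le_iff₀ hcpos]; linarith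
  have hs_lo : (1 - η) * (R - D) < s := by rw [hs, lt_div_iff₀ hcpos]; linarith
  have hs0 : 0 < s := lt_of_le_of_lt (mul_nonneg (by linarith) (by linarith)) hs_lo
  let a : Fin d → ℤ := fun i => if i = i0 then m else if i = i1 then n else round (s * u i)
  have ha0 : a i0 = m := by simp [a]
  have ha1 : a i1 = n := by simp [a, hi1]
  let f : Fin d → ℝ := fun i => a i - s * u i
  have hf0 : f i0 = 0 := by simp only [f, ha0]; rw [hms, hc]; ring
  have hf : ∀ i, |f i| ≤ 1 := by
    intro i
    by_cases h : i = i0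
    · rw [h, hf0]; simp
    by_cases h' : i = i1
    · rw [h']; simp only [f, ha1]
      convert hn using 2
      rw [hs]; ring
    · have : f i = -(s * u i - round (s * u i)) := by simp [f, a, h, h']
      rw [this, abs_neg]
      linarith [abs_sub_round (s * u i)]
  have haf : ∀ i, (a i : ℝ) = s * u i + f i := fun i => by simp [f]
  set E : ℝ := ∑ i, f i ^ 2 with hE
  set B : ℝ := ∑ i, f i * u i with hB
  have hED : E ≤ D ^ 2 := by
    rw [hDsq, hE, ← Finset.add_sum_erase _ _ (Finset.mem_univ i0), hf0]
    calc (0 : ℝ) ^ 2 + (∑ i ∈ Finset.univ.erase i0, f i ^ 2 : ℝ)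
        ≤ 0 ^ 2 + ∑ _i ∈ Finset.univ.erase i0, (1 : ℝ) := by
          gcongr with i _
          exact (sq_le_one_iff_abs_le_one _).mpr (hf i)
      _ = (d : ℝ) - 1 := by
          rw [Finset.sum_const, Finset.card_erase_of_mem (Finset.mem_univ _)]
          simp [Nat.cast_sub (show 1 ≤ d by omega)]
  have hBE : B ^ 2 ≤ E := by
    have := Finset.sum_mul_sq_le_sq_mul_sq Finset.univ f u
    rw [hu, mul_one] at this
    exact this
  have hBD : |B| ≤ D := abs_le_of_sq_le_sq (hBE.trans hED) hD0.le
  obtain ⟨hB1, hB2⟩ := abs_le.mp hBD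
  have hA : ∑ i, (a i : ℝ) * u i = s + B := by
    calc ∑ i, (a i : ℝ) * u i = ∑ i, (s * u i ^ 2 + f i * u i) :=
          Finset.sum_congr rfl fun i _ => by rw [haf]; ring
      _ = s + B := by rw [Finset.sum_add_distrib, ← Finset.mul_sum, hu, mul_one]
  have hN : ∑ i, (a i : ℝ) ^ 2 = s ^ 2 + 2 * s * B + E := by
    calc ∑ i, (a i : ℝ) ^ 2 = ∑ i, (s ^ 2 * u i ^ 2 + 2 * s * (f i * u i) + f i ^ 2) :=
          Finset.sum_congr rfl fun i _ => by rw [haf]; ring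
      _ = s ^ 2 + 2 * s * B + E := by
          rw [Finset.sum_add_distrib, Finset.sum_add_distrib, ← Finset.mul_sum, ← Finset.mul_sum,
            hu, mul_one]
  have h2D : 2 * D ≤ η * R := by
    have : 2 * D / η ≤ R := by linarith
    rw [div_le_iff₀ hη0] at this
    linarith
  have hAlo : (1 - 2 * η) * R ≤ s + B := by
    have h1 : 0 ≤ η * D := by positivity
    linarith
  have hApos : 0 < s + B := lt_of_lt_of_le (mul_pos (by linarith) hRpos) hAlo
  refine ⟨a, ?_, ?_, ?_, ?_, ?_, ?_⟩
  · intro h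
    have : m = 0 := by rw [← ha0, h]; rfl
    rw [hs, this] at hs0
    simp at hs0
  · have h1 : Finset.univ.gcd (fun i => (a i).natAbs) ∣ m.natAbs := by
      rw [← ha0]; exact Finset.gcd_dvd (f := fun i => (a i).natAbs) (Finset.mem_univ i0)
    have h2 : Finset.univ.gcd (fun i => (a i).natAbs) ∣ n.natAbs := by
      rw [← ha1]; exact Finset.gcd_dvd (f := fun i => (a i).natAbs) (Finset.mem_univ i1)
    exact Nat.eq_one_of_dvd_coprimes (Int.isCoprime_iff_gcd_eq_one.mp hmn) h1 h2
  · rw [hN]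
    have h1 : (1 - ε) * R ≤ s + B :=
      le_trans (mul_le_mul_of_nonneg_right (by linarith) hRpos.le) hAlo
    refine h1.trans (Real.le_sqrt_of_sq_le ?_)
    linarith [add_sq s B]
  · rw [hN]
    apply Real.sqrt_le_iff.mpr
    refine ⟨hRpos.le, ?_⟩
    have h1 : (s + D) ^ 2 ≤ R ^ 2 := pow_le_pow_left₀ (by linarith) (by linarith) 2
    have h2 : s * B ≤ s * D := mul_le_mul_of_nonneg_left hB2 hs0.le
    linarith [add_sq s D]
  · rw [hA]; exact hApos
  · rw [hN, hA]
    have h1 : Real.sqrt (s ^ 2 + 2 * s * B + E - (s + B) ^ 2) ≤ D := by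
      apply Real.sqrt_le_iff.mpr
      refine ⟨hD0.le, ?_⟩
      linarith [sq_nonneg B, add_sq s B]
    refine h1.trans ?_
    have h2 : R ≤ (1 + ε) * (s + B) := by
      have : (1 + e) * (s + B) ≤ (1 + ε) * (s + B) := by gcongr
      have h3 : (1 + e) * ((1 - 2 * η) * R) ≤ (1 + e) * (s + B) := by gcongr
      have h4 : R ≤ (1 + e) * ((1 - 2 * η) * R) := by
        have : 1 ≤ (1 + e) * (1 - 2 * η) := by rw [hη]; nlinarith
        have h5 := mul_le_mul_of_nonneg_right this hRpos.le
        linarith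
      linarith
    rw [div_mul_eq_mul_div, le_div_iff₀ hRpos]
    have h5 := mul_le_mul_of_nonneg_left h2 hD0.le
    linarith
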